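/- Let γ, δ > 0 be constants and for each n ≥ 3 let p_n = (log n + ω(n))/n where ω(n) → ∞ and ω(n) = o(log n). Then the sequence a_n = C(n, ⌈γ·n/log n⌉)² · C(⌈γ·n/log n⌉², ⌈δ·n/log log n⌉) · p_n^{⌈δ·n/log log n⌉} tends to 0 as n → ∞. -/

import Mathlib

open Filter

/-!
The bound `C(N, k) ≤ (e N / k) ^ k` is used twice. For `k = o(n)` it gives `C(n, k) = exp(o(n))`,
since `x (1 - log x) → 0` as `x = k / n → 0`; hence choosing the two vertex sets costs only
`exp(o(n))`. With `k = O(n / log n)`, `p = O(log n / n)` and `n / log log n = O(m)`, it bounds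
`C(k², m) p ^ m` by the `m`-th power of `e k² p / m = O(log log n / log n)`, which is
`o((log n) ^ (-1/2))`. That power is at most `exp(-(m / 2) log log n) ≤ exp(-c n)` for some `c > 0`,
which beats the first factor.
-/

open Asymptotics Real

lemma choose_le_exp_one_mul_div_pow (N k : ℕ) :
    (N.choose k : ℝ) ≤ (exp 1 * N / k) ^ k := by
  rcases k.eq_zero_or_pos with rfl | hk
  · simp
  calc (N.choose k : ℝ) ≤ (N : ℝ) ^ k / k.factorial := Nat.choose_le_pow_div k N
    _ = (k : ℝ) ^ k / k.factorial * ((N : ℝ) ^ k / (k : ℝ) ^ k) := by field_simp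
    _ ≤ exp k * ((N : ℝ) ^ k / (k : ℝ) ^ k) := by
      gcongr
      exact pow_div_factorial_le_exp k k.cast_nonneg k
    _ = (exp 1 * N / k) ^ k := by
      rw [← exp_one_pow, div_pow, mul_pow, mul_div_assoc]

lemma choose_le_exp_mul_add_negMulLog (N k : ℕ) :
    (N.choose k : ℝ) ≤ exp (N * (k / N + negMulLog (k / N))) := by
  rcases N.eq_zero_or_pos with rfl | hN
  · rcases k with _ | k <;> simp
  rcases k.eq_zero_or_pos with rfl | hk
  · simp
  calc (N.choose k : ℝ) ≤ (exp 1 * N / k) ^ k := choose_le_exp_one_mul_div_pow N k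
    _ = exp (k * (1 + -log (k / N))) := by
      rw [exp_nat_mul, exp_add, exp_neg, exp_log (by positivity), inv_div, mul_div_assoc]
    _ = exp (N * (k / N + negMulLog (k / N))) := by
      congr 1
      rw [negMulLog]
      field_simp

section

variable {α : Type*} {l : Filter α}

lemma eventually_choose_le_exp_of_isLittleO {N k : α → ℕ}
    (hk : (fun a => (k a : ℝ)) =o[l] fun a => (N a : ℝ)) {ε : ℝ} (hε : 0 < ε) :
    ∀ᶠ a in l, ((N a).choose (k a) : ℝ) ≤ exp (ε * N a) := by
  have hlim : Tendsto (fun a => (k a / N a + negMulLog (k a / N a) : ℝ)) l (nhds 0) := by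
    have hcont : Continuous fun x : ℝ => x + negMulLog x := by fun_prop
    exact (hcont.tendsto' 0 0 (by simp)).comp hk.tendsto_div_nhds_zero
  filter_upwards [hlim.eventually_le_const hε] with a ha
  calc ((N a).choose (k a) : ℝ)
      ≤ exp (N a * (k a / N a + negMulLog (k a / N a))) := choose_le_exp_mul_add_negMulLog _ _
    _ ≤ exp (ε * N a) := by
      rw [mul_comm ε]
      gcongr

lemma exists_abs_pow_le_exp_neg_of_isLittleO_rpow_neg {u x q : α → ℝ} {m : α → ℕ} {r : ℝ}
    (hu : Tendsto u l atTop) (hr : 0 < r) (hq : q =o[l] fun a => u a ^ (-r))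
    (hm : (fun a => x a / log (u a)) =O[l] fun a => (m a : ℝ)) :
    ∃ c > 0, ∀ᶠ a in l, |q a| ^ m a ≤ exp (-(c * x a)) := by
  obtain ⟨C, hC, hxm⟩ := hm.exists_pos
  refine ⟨r / C, by positivity, ?_⟩
  filter_upwards [hxm.bound, hq.bound one_pos, hu.eventually_gt_atTop 1] with a hxa hqa hua
  have hua0 : 0 < u a := zero_lt_one.trans hua
  have hq_le : |q a| ≤ exp (-(r * log (u a))) := by
    rw [one_mul, norm_of_nonneg (rpow_nonneg hua0.le _), rpow_def_of_pos hua0] at hqa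
    rwa [mul_comm r, ← mul_neg]
  have hx_le : x a ≤ C * m a * log (u a) := by
    rw [← div_le_iff₀ (log_pos hua)]
    exact (le_norm_self _).trans (by simpa only [RCLike.norm_natCast] using hxa)
  calc |q a| ^ m a ≤ exp (-(r * log (u a))) ^ m a := by gcongr
    _ = exp (-(r / C * (C * m a * log (u a)))) := by
      rw [← exp_nat_mul]
      congr 1
      field_simp
    _ ≤ exp (-(r / C * x a)) := by gcongr

lemma tendsto_div_atTop_of_isLittleO {f g : α → ℝ} (hgf : g =o[l] f)
    (hf : ∀ᶠ a in l, 0 < f a) (hg : ∀ᶠ a in l, 0 < g a) :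
    Tendsto (fun a => f a / g a) l atTop := by
  have hpos : ∀ᶠ a in l, g a / f a ∈ Set.Ioi 0 := by
    filter_upwards [hf, hg] with a hfa hga using div_pos hga hfa
  simpa only [Pi.inv_def, inv_div] using
    (tendsto_nhdsWithin_iff.2 ⟨hgf.tendsto_div_nhds_zero, hpos⟩).inv_tendsto_nhdsGT_zero

lemma isTheta_natCeil_const_mul {f : α → ℝ} {c : ℝ} (hc : 0 < c) (hf : Tendsto f l atTop) :
    (fun a => (⌈c * f a⌉₊ : ℝ)) =Θ[l] f :=
  (isEquivalent_nat_ceil.comp_tendsto (hf.const_mul_atTop hc)).isTheta.trans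
    ((isTheta_refl f l).const_mul_left hc.ne')

end

lemma isLittleO_log_div_self_rpow_neg {r : ℝ} (hr : r < 1) :
    (fun x => log x / x) =o[atTop] fun x => x ^ (-r) := by
  have hlog : log =o[atTop] fun x : ℝ => x ^ (1 - r) := isLittleO_log_rpow_atTop (by linarith)
  refine (hlog.mul_isBigO (isBigO_refl (fun x : ℝ => x⁻¹) atTop)).congr' .rfl ?_
  filter_upwards [eventually_gt_atTop 0] with x hx
  rw [← rpow_neg_one, ← rpow_add hx]
  ring_nf

lemma tendsto_log_natCast_atTop : Tendsto (fun n : ℕ => log n) atTop atTop :=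
  tendsto_log_atTop.comp tendsto_natCast_atTop_atTop

lemma tendsto_log_log_natCast_atTop : Tendsto (fun n : ℕ => log (log n)) atTop atTop :=
  tendsto_log_atTop.comp tendsto_log_natCast_atTop

lemma isLittleO_log_natCast : (fun n : ℕ => log n) =o[atTop] fun n : ℕ => (n : ℝ) :=
  isLittleO_log_id_atTop.comp_tendsto tendsto_natCast_atTop_atTop

lemma isLittleO_log_log_natCast : (fun n : ℕ => log (log n)) =o[atTop] fun n : ℕ => (n : ℝ) :=
  (isLittleO_log_id_atTop.comp_tendsto tendsto_log_natCast_atTop).trans isLittleO_log_natCast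

lemma isLittleO_natCast_div_log :
    (fun n : ℕ => n / log n) =o[atTop] fun n : ℕ => (n : ℝ) := by
  have hinv : (fun n : ℕ => (log n)⁻¹) =o[atTop] fun _ : ℕ => (1 : ℝ) :=
    (isLittleO_one_iff ℝ).2 tendsto_log_natCast_atTop.inv_tendsto_atTop
  simpa only [div_eq_mul_inv, mul_one] using
    (isBigO_refl (fun n : ℕ => (n : ℝ)) atTop).mul_isLittleO hinv

lemma tendsto_natCast_div_log_atTop : Tendsto (fun n : ℕ => n / log n) atTop atTop :=
  tendsto_div_atTop_of_isLittleO isLittleO_log_natCast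
    (tendsto_natCast_atTop_atTop.eventually_gt_atTop 0)
    (tendsto_log_natCast_atTop.eventually_gt_atTop 0)

lemma tendsto_natCast_div_log_log_atTop : Tendsto (fun n : ℕ => n / log (log n)) atTop atTop :=
  tendsto_div_atTop_of_isLittleO isLittleO_log_log_natCast
    (tendsto_natCast_atTop_atTop.eventually_gt_atTop 0)
    (tendsto_log_log_natCast_atTop.eventually_gt_atTop 0)

lemma sq_div_mul_isBigO_log_log_div_log {k m p : ℕ → ℝ}
    (hk : k =O[atTop] fun n : ℕ => n / log n)
    (hm : (fun n : ℕ => n / log (log n)) =O[atTop] m)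
    (hp : p =O[atTop] fun n : ℕ => log n / n) :
    (fun n => k n ^ 2 / m n * p n) =O[atTop] fun n : ℕ => log (log n) / log n := by
  have hm_inv : (fun n => (m n)⁻¹) =O[atTop] fun n : ℕ => (n / log (log n))⁻¹ :=
    hm.inv_rev <| (tendsto_natCast_div_log_log_atTop.eventually_ne_atTop 0).mono
      fun n hn h => absurd h hn
  refine (((hk.pow 2).mul hm_inv).mul hp).congr' .rfl ?_
  filter_upwards [eventually_gt_atTop 0, tendsto_log_natCast_atTop.eventually_gt_atTop 0]
    with n hn hlog
  field_simp

lemma exists_choose_mul_abs_pow_le_exp_neg {k m : ℕ → ℕ} {p : ℕ → ℝ}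
    (hk : (fun n => (k n : ℝ)) =O[atTop] fun n : ℕ => n / log n)
    (hm : (fun n : ℕ => n / log (log n)) =O[atTop] fun n => (m n : ℝ))
    (hp : p =O[atTop] fun n : ℕ => log n / n) :
    ∃ c > 0, ∀ᶠ n : ℕ in atTop, ((k n ^ 2).choose (m n) : ℝ) * |p n| ^ m n ≤ exp (-(c * n)) := by
  let q : ℕ → ℝ := fun n => exp 1 * (k n ^ 2 / m n * p n)
  have hq : q =o[atTop] fun n : ℕ => log n ^ (-(1 / 2) : ℝ) :=
    ((sq_div_mul_isBigO_log_log_div_log hk hm hp).const_mul_left _).trans_isLittleO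
      ((isLittleO_log_div_self_rpow_neg (by norm_num)).comp_tendsto tendsto_log_natCast_atTop)
  obtain ⟨c, hc, hqm⟩ := exists_abs_pow_le_exp_neg_of_isLittleO_rpow_neg
    tendsto_log_natCast_atTop one_half_pos hq hm
  refine ⟨c, hc, hqm.mono fun n hn => ?_⟩
  calc ((k n ^ 2).choose (m n) : ℝ) * |p n| ^ m n
      ≤ (exp 1 * (k n ^ 2 : ℕ) / m n) ^ m n * |p n| ^ m n := by
        gcongr
        exact choose_le_exp_one_mul_div_pow _ _
    _ = |q n| ^ m n := by
      have hk0 : 0 ≤ (k n ^ 2 / m n : ℝ) := by positivity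
      rw [← mul_pow, abs_mul, abs_mul, abs_of_pos (exp_pos 1), abs_of_nonneg hk0]
      push_cast
      ring
    _ ≤ exp (-(c * n)) := hn

theorem lemma_e_estimate_general {k m : ℕ → ℕ} {p : ℕ → ℝ}
    (hk : (fun n => (k n : ℝ)) =O[atTop] fun n : ℕ => n / log n)
    (hm : (fun n : ℕ => n / log (log n)) =O[atTop] fun n => (m n : ℝ))
    (hp : p =O[atTop] fun n : ℕ => log n / n) :
    Tendsto (fun n : ℕ =>
      (n.choose (k n) : ℝ) ^ 2 * ((k n ^ 2).choose (m n) : ℝ) * p n ^ m n) atTop (nhds 0) := by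
  obtain ⟨c, hc, hedges⟩ := exists_choose_mul_abs_pow_le_exp_neg hk hm hp
  have hsets := eventually_choose_le_exp_of_isLittleO
    (hk.trans_isLittleO isLittleO_natCast_div_log) (ε := c / 4) (by positivity)
  have hlim : Tendsto (fun n : ℕ => exp (-(c / 2 * n))) atTop (nhds 0) :=
    tendsto_exp_neg_atTop_nhds_zero.comp
      (tendsto_natCast_atTop_atTop.const_mul_atTop (by positivity))
  refine squeeze_zero_norm' ?_ hlim
  filter_upwards [hsets, hedges] with n hsets hedges
  calc ‖(n.choose (k n) : ℝ) ^ 2 * ((k n ^ 2).choose (m n) : ℝ) * p n ^ m n‖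
      = (n.choose (k n) : ℝ) ^ 2 * (((k n ^ 2).choose (m n) : ℝ) * |p n| ^ m n) := by
        simp [mul_assoc]
    _ ≤ exp (c / 4 * n) ^ 2 * exp (-(c * n)) := by gcongr
    _ = exp (-(c / 2 * n)) := by
      rw [← exp_nat_mul, ← exp_add]
      congr 1
      push_cast
      ring

/-- for constants `γ, δ > 0` and `p_n = (log n + ω(n))/n`, the union-bound
estimate of Lemma 2(e),
`C(n,⌈γn/log n⌉)² · C(⌈γn/log n⌉², ⌈δn/log log n⌉) · p_n^{⌈δn/log log n⌉}`, tends to `0`. -/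
theorem lemma_e_estimate (γ δ : ℝ) (hγ : 0 < γ) (hδ : 0 < δ)
    (w : ℕ → ℝ) (hw : Tendsto w atTop atTop)
    (hwo : w =o[atTop] fun n => Real.log n)
    (p : ℕ → ℝ) (hp : ∀ n : ℕ, p n = (Real.log n + w n) / n) :
    Tendsto (fun n : ℕ =>
      ((n.choose ⌈γ * n / Real.log n⌉₊ : ℝ)) ^ 2 *
        (((⌈γ * n / Real.log n⌉₊ ^ 2).choose ⌈δ * n / Real.log (Real.log n)⌉₊ : ℝ)) *
        p n ^ ⌈δ * n / Real.log (Real.log n)⌉₊)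
      atTop (nhds 0) := by
  obtain rfl : p = fun n : ℕ => (log n + w n) / n := funext hp
  simp only [mul_div_assoc]
  exact lemma_e_estimate_general
    (isTheta_natCeil_const_mul hγ tendsto_natCast_div_log_atTop).isBigO
    (isTheta_natCeil_const_mul hδ tendsto_natCast_div_log_log_atTop).isBigO_symm
    (((isBigO_refl _ _).add hwo.isBigO).mul (isBigO_refl _ _))
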